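/- Let d ≥ 2 be an integer, I ≥ 1, and let N_1, …, N_I ≥ 2 be pairwise coprime integers. Let P ∈ ℤ[X] be an irreducible polynomial of degree d with naive height at most H ≥ 1, and let Q ∈ ℤ[X] have degree ≤ d and naive height at most K ≥ 1. Suppose that for each i there is a monic polynomial A_i ∈ ℤ[X] of degree a_i with 1 ≤ a_i ≤ d such that both P mod N_i and Q mod N_i are multiples of A_i mod N_i in (ℤ/N_iℤ)[X]. If Π_{i=1}^{I} N_i^{a_i} > (2d)! · H^d · K^d, then Q is a multiple of P in ℤ[X]. -/

import Mathlib

/-!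
Let `n` bound the degree of `Q` and let `r` be the resultant of `P` and `Q`, the determinant of
their Sylvester matrix. The columns of that matrix are coefficient vectors of combinations of `P`
and `Q`. A unipotent row operation replaces, in each column, the lowest `deg Aᵢ` coefficients by
those of the remainder modulo `Aᵢ`. These are divisible by `Nᵢ`, so `Nᵢ ^ deg Aᵢ ∣ r`, and by
coprimality the product of these powers divides `r`. The Leibniz expansion gives
`|r| ≤ (deg P + n)! * H ^ n * K ^ deg P`, so `r = 0`. Then `P * q + Q * p = 0` for some
`(p, q) ≠ 0` with `deg p < deg P`, and primality of `P` forces `P ∣ Q`.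
-/

open Polynomial

section Determinant

variable {ι R : Type*} [Fintype ι] [DecidableEq ι] [CommRing R]

theorem det_mem_pow_card_of_forall_row_mem {J : Ideal R} {M : Matrix ι ι R} {s : Finset ι}
    (hM : ∀ i ∈ s, ∀ j, M i j ∈ J) : M.det ∈ J ^ s.card := by
  rw [← Matrix.det_transpose, Matrix.det_apply']
  refine Ideal.sum_mem _ fun σ _ ↦ Ideal.mul_mem_left _ _ ?_
  have hs : ∏ i ∈ s, M i (σ i) ∈ J ^ s.card := by
    simpa only [Finset.prod_const] using Ideal.prod_mem_prod fun i hi ↦ hM i hi (σ i)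
  simpa only [Matrix.transpose_apply, Finset.prod_mul_prod_compl] using
    Ideal.mul_mem_right (∏ i ∈ sᶜ, M i (σ i)) _ hs

theorem abv_det_le_factorial_smul_prod [Nontrivial R]
    {S : Type*} [CommRing S] [LinearOrder S] [IsStrictOrderedRing S] {abv : AbsoluteValue R S}
    {M : Matrix ι ι R} {c : ι → S} (hM : ∀ i j, abv (M i j) ≤ c j) :
    abv M.det ≤ (Fintype.card ι).factorial • ∏ j, c j :=
  calc
    abv M.det = abv (∑ σ : Equiv.Perm ι, Equiv.Perm.sign σ • ∏ j, M (σ j) j) := by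
      rw [Matrix.det_apply]
    _ ≤ ∑ σ : Equiv.Perm ι, abv (Equiv.Perm.sign σ • ∏ j, M (σ j) j) := abv.sum_le _ _
    _ = ∑ σ : Equiv.Perm ι, ∏ j, abv (M (σ j) j) := by
      simp only [abv.map_units_int_smul, abv.map_prod]
    _ ≤ ∑ _σ : Equiv.Perm ι, ∏ j, c j := by gcongr; exact hM _ _
    _ = (Fintype.card ι).factorial • ∏ j, c j := by simp [Fintype.card_perm]

theorem det_toMatrix_ne_zero_of_injective [IsDomain R]
    {V W : Type*} [AddCommGroup V] [Module R V] [AddCommGroup W] [Module R W]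
    (b : Module.Basis ι R V) (c : Module.Basis ι R W) {T : V →ₗ[R] W}
    (hT : Function.Injective T) : (T.toMatrix b c).det ≠ 0 := by
  intro hdet
  obtain ⟨v, hv, hTv⟩ := Matrix.exists_mulVec_eq_zero_iff.2 hdet
  obtain ⟨x, rfl⟩ := b.equivFun.surjective v
  have hx : T x = 0 := c.equivFun.injective <| by
    simpa only [Module.Basis.equivFun_apply, LinearMap.toMatrix_mulVec_repr, map_zero] using hTv
  exact hv (by rw [hT (hx.trans (map_zero T).symm), map_zero])

end Determinant

section Remainder

variable {R : Type*} [CommRing R]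

theorem coeff_modByMonic_mem_ker {S : Type*} [CommRing S] {φ : R →+* S} {A f : R[X]}
    (hA : A.Monic) (hf : A.map φ ∣ f.map φ) (k : ℕ) : (f %ₘ A).coeff k ∈ RingHom.ker φ := by
  have hmap : (f %ₘ A).map φ = 0 := by
    rwa [map_modByMonic _ hA, modByMonic_eq_zero_iff_dvd (hA.map φ)]
  rw [RingHom.mem_ker, ← coeff_map, hmap, coeff_zero]

theorem X_pow_modByMonic_eq_self [Nontrivial R] {A : R[X]} (hA : A.Monic) {k : ℕ}
    (hk : k < A.natDegree) : (X ^ k : R[X]) %ₘ A = X ^ k := by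
  rwa [modByMonic_eq_self_iff hA, degree_X_pow, degree_eq_natDegree hA.ne_zero, Nat.cast_lt]

/-- The coefficients of a polynomial of degree `< N`, with those of index `< deg A` replaced by the
coefficients of its remainder modulo `A`. As a matrix in the monomial basis, this is the row
operation that exposes divisibility of the remainders modulo `A`. -/
noncomputable def remainderCoeffs (A : R[X]) (N : ℕ) : R[X]_N →ₗ[R] Fin N → R :=
  LinearMap.pi fun i ↦
    if (i : ℕ) < A.natDegree then lcoeff R i ∘ₗ modByMonicHom A ∘ₗ (R[X]_N).subtype
    else lcoeff R i ∘ₗ (R[X]_N).subtype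

theorem remainderCoeffs_apply (A : R[X]) {N : ℕ} (p : R[X]_N) (i : Fin N) :
    remainderCoeffs A N p i =
      if (i : ℕ) < A.natDegree then ((p : R[X]) %ₘ A).coeff i else (p : R[X]).coeff i := by
  simp only [remainderCoeffs, LinearMap.pi_apply]
  split_ifs <;> simp

theorem remainderCoeffs_basis_of_le {A : R[X]} (hA : A.Monic) {N : ℕ} {i j : Fin N}
    (hji : j ≤ i) : remainderCoeffs A N (degreeLT.basis R N j) i = if i = j then 1 else 0 := by
  nontriviality R
  have hcoeff : (X ^ (j : ℕ) : R[X]).coeff i = if i = j then 1 else 0 := by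
    simp only [coeff_X_pow, Fin.ext_iff]
  rw [remainderCoeffs_apply, degreeLT.basis_val, ← hcoeff]
  split_ifs with hi
  · rw [X_pow_modByMonic_eq_self hA (lt_of_le_of_lt hji hi)]
  · rfl

theorem det_toMatrix_remainderCoeffs {A : R[X]} (hA : A.Monic) (N : ℕ) :
    ((remainderCoeffs A N).toMatrix (degreeLT.basis R N) (Pi.basisFun R (Fin N))).det = 1 := by
  rw [Matrix.det_of_isUpperTriangular]
  · exact Finset.prod_eq_one fun i _ ↦ by
      simp [LinearMap.toMatrix_apply, remainderCoeffs_basis_of_le hA le_rfl]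
  · intro i j (hji : j < i)
    simp [LinearMap.toMatrix_apply, remainderCoeffs_basis_of_le hA hji.le, hji.ne']

end Remainder

section Resultant

variable {R : Type*} [CommRing R] {f g : R[X]} {m n : ℕ}

theorem resultant_mem_ker_pow_natDegree {S : Type*} [CommRing S] {φ : R →+* S} {A : R[X]}
    (hA : A.Monic) (hAdeg : A.natDegree ≤ m + n) (hf : f.natDegree ≤ m) (hg : g.natDegree ≤ n)
    (hAf : A.map φ ∣ f.map φ) (hAg : A.map φ ∣ g.map φ) :
    resultant f g m n ∈ RingHom.ker φ ^ A.natDegree := by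
  let M := (remainderCoeffs A (m + n) ∘ₗ sylvesterMap f g hf hg).toMatrix
    (degreeLT.basisProd R m n) (Pi.basisFun R (Fin (m + n)))
  have hdet : resultant f g m n = M.det := by
    dsimp only [M]
    rw [LinearMap.toMatrix_comp _ (degreeLT.basis R (m + n)), Matrix.det_mul,
      det_toMatrix_remainderCoeffs hA, one_mul, degreeLT.basisProd, toMatrix_sylvesterMap',
      resultant]
  have hrow : ∀ i : Fin (m + n), (i : ℕ) < A.natDegree → ∀ j, M i j ∈ RingHom.ker φ := by
    intro i hi j
    set pq := degreeLT.basisProd R m n j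
    have hdvd : A.map φ ∣ (sylvesterMap f g hf hg pq : R[X]).map φ := by
      simpa using dvd_add (hAf.mul_right _) (hAg.mul_right _)
    simpa [M, LinearMap.toMatrix_apply, remainderCoeffs_apply, hi] using
      coeff_modByMonic_mem_ker hA hdvd i
  have hcard : (Finset.univ.filter fun i : Fin (m + n) ↦ (i : ℕ) < A.natDegree).card
      = A.natDegree := by
    rw [Fin.card_filter_val_lt, min_eq_right hAdeg]
  rw [hdet, ← hcard]
  exact det_mem_pow_card_of_forall_row_mem fun i hi ↦ hrow i (Finset.mem_filter.1 hi).2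

theorem abv_resultant_le [Nontrivial R]
    {S : Type*} [CommRing S] [LinearOrder S] [IsStrictOrderedRing S] {abv : AbsoluteValue R S}
    {H K : S} (hf : ∀ k, abv (f.coeff k) ≤ H) (hg : ∀ k, abv (g.coeff k) ≤ K) :
    abv (resultant f g m n) ≤ (m + n).factorial • (K ^ m * H ^ n) := by
  have hH : 0 ≤ H := (abv.nonneg _).trans (hf 0)
  have hK : 0 ≤ K := (abv.nonneg _).trans (hg 0)
  have hcol : ∀ i j, abv (sylvester f g m n i j) ≤ Fin.append (fun _ ↦ K) (fun _ ↦ H) j := by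
    intro i j
    induction j using Fin.addCases with
    | left j =>
      simp only [sylvester, Matrix.of_apply, Fin.addCases_left, Fin.append_left]
      split_ifs
      exacts [hg _, by rwa [abv.map_zero]]
    | right j =>
      simp only [sylvester, Matrix.of_apply, Fin.addCases_right, Fin.append_right]
      split_ifs
      exacts [hf _, by rwa [abv.map_zero]]
  simpa [Fin.prod_univ_add, resultant] using abv_det_le_factorial_smul_prod hcol

theorem dvd_of_resultant_eq_zero [IsDomain R] (hf : Prime f) (hg : g.natDegree ≤ n)
    (h : resultant f g f.natDegree n = 0) : f ∣ g := by
  by_contra hfg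
  rw [resultant, ← toMatrix_sylvesterMap' f g le_rfl hg] at h
  refine det_toMatrix_ne_zero_of_injective _ _
    ((injective_iff_map_eq_zero _).2 fun ⟨p, q⟩ hpq ↦ ?_) h
  replace hpq : f * (q : R[X]) + g * p = 0 := congrArg Subtype.val hpq
  have hfp : f ∣ (p : R[X]) :=
    (hf.dvd_or_dvd ⟨-q, by linear_combination hpq⟩).resolve_left hfg
  have hp : (p : R[X]) = 0 := eq_zero_of_dvd_of_degree_lt hfp <| by
    simpa [degree_eq_natDegree hf.ne_zero] using mem_degreeLT.1 p.2
  have hq : (q : R[X]) = 0 := by simpa [hp, hf.ne_zero] using hpq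
  exact Prod.ext (Subtype.ext hp) (Subtype.ext hq)

end Resultant

section Integers

variable {P Q : ℤ[X]} {m n : ℕ}

theorem natCast_pow_natDegree_dvd_resultant {N : ℕ} {A : ℤ[X]} (hA : A.Monic)
    (hAdeg : A.natDegree ≤ m + n) (hP : P.natDegree ≤ m) (hQ : Q.natDegree ≤ n)
    (hAP : A.map (Int.castRingHom (ZMod N)) ∣ P.map (Int.castRingHom (ZMod N)))
    (hAQ : A.map (Int.castRingHom (ZMod N)) ∣ Q.map (Int.castRingHom (ZMod N))) :
    (N : ℤ) ^ A.natDegree ∣ resultant P Q m n := by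
  rw [← Ideal.mem_span_singleton, ← Ideal.span_singleton_pow, ← ZMod.ker_intCastRingHom]
  exact resultant_mem_ker_pow_natDegree hA hAdeg hP hQ hAP hAQ

theorem abs_resultant_le {H K : ℝ} (hP : ∀ k, |(P.coeff k : ℝ)| ≤ H)
    (hQ : ∀ k, |(Q.coeff k : ℝ)| ≤ K) :
    |((resultant P Q m n : ℤ) : ℝ)| ≤ (m + n).factorial * H ^ n * K ^ m := by
  have h := abv_resultant_le (m := m) (n := n)
    (abv := AbsoluteValue.abs.comp (f := Int.castRingHom ℝ) Int.cast_injective) hP hQ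
  rw [nsmul_eq_mul, mul_comm (K ^ m), ← mul_assoc] at h
  exact h

theorem stmt_12_general {ι : Type*} [Fintype ι] {N : ι → ℕ}
    (hcop : Pairwise (Function.onFun Nat.Coprime N))
    (hP : Irreducible P) {H : ℝ} (hPH : ∀ k, |(P.coeff k : ℝ)| ≤ H)
    (hQdeg : Q.natDegree ≤ n) {K : ℝ} (hQK : ∀ k, |(Q.coeff k : ℝ)| ≤ K)
    {A : ι → ℤ[X]} (hA : ∀ i, (A i).Monic) (hAdeg : ∀ i, (A i).natDegree ≤ P.natDegree + n)
    (hAP : ∀ i, (A i).map (Int.castRingHom (ZMod (N i))) ∣ P.map (Int.castRingHom (ZMod (N i))))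
    (hAQ : ∀ i, (A i).map (Int.castRingHom (ZMod (N i))) ∣ Q.map (Int.castRingHom (ZMod (N i))))
    (hbig : ((P.natDegree + n).factorial : ℝ) * H ^ n * K ^ P.natDegree <
      ∏ i, (N i : ℝ) ^ (A i).natDegree) :
    P ∣ Q := by
  have hdvd : ∏ i, (N i : ℤ) ^ (A i).natDegree ∣ resultant P Q P.natDegree n :=
    Fintype.prod_dvd_of_coprime (fun i j hij ↦ (Nat.isCoprime_iff_coprime.2 (hcop hij)).pow)
      fun i ↦ natCast_pow_natDegree_dvd_resultant (hA i) (hAdeg i) le_rfl hQdeg (hAP i) (hAQ i)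
  have hlt : |resultant P Q P.natDegree n| < ∏ i, (N i : ℤ) ^ (A i).natDegree := by
    exact_mod_cast (abs_resultant_le hPH hQK).trans_lt hbig
  exact dvd_of_resultant_eq_zero hP.prime hQdeg (Int.eq_zero_of_abs_lt_dvd hdvd hlt)

end Integers

/-- **Heights and intersections.**  Let `N₁, …, N_I` be pairwise coprime integers `≥ 2`,
`P ∈ ℤ[X]` irreducible of degree `d ≥ 2` with naive height `≤ H`, and `Q ∈ ℤ[X]` of degree
`≤ d` with naive height `≤ K`.  Suppose for each `i` both `P mod Nᵢ` and `Q mod Nᵢ` are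
multiples of the same monic polynomial `Aᵢ mod Nᵢ` of degree `aᵢ` with `1 ≤ aᵢ ≤ d`.
If `∏ Nᵢ^{aᵢ} > (2d)!·H^d·K^d`, then `P` divides `Q` in `ℤ[X]`. -/
theorem stmt_12 (d : ℕ) (hd : 2 ≤ d) (I : ℕ) (hI : 1 ≤ I)
    (N : Fin I → ℕ) (hN : ∀ i, 2 ≤ N i)
    (hcop : ∀ i j : Fin I, i ≠ j → Nat.Coprime (N i) (N j))
    (P : Polynomial ℤ) (hP : Irreducible P) (hPdeg : P.natDegree = d)
    (H : ℝ) (hH : 1 ≤ H) (hPH : ∀ n : ℕ, |(P.coeff n : ℝ)| ≤ H)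
    (Q : Polynomial ℤ) (hQdeg : Q.natDegree ≤ d)
    (K : ℝ) (hK : 1 ≤ K) (hQK : ∀ n : ℕ, |(Q.coeff n : ℝ)| ≤ K)
    (A : Fin I → Polynomial ℤ) (a : Fin I → ℕ)
    (hAmonic : ∀ i, (A i).Monic) (hAdeg : ∀ i, (A i).natDegree = a i)
    (ha1 : ∀ i, 1 ≤ a i) (had : ∀ i, a i ≤ d)
    (hPA : ∀ i, (A i).map (Int.castRingHom (ZMod (N i))) ∣
        P.map (Int.castRingHom (ZMod (N i))))
    (hQA : ∀ i, (A i).map (Int.castRingHom (ZMod (N i))) ∣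
        Q.map (Int.castRingHom (ZMod (N i))))
    (hbig : (Nat.factorial (2 * d) : ℝ) * H ^ d * K ^ d < ∏ i, (N i : ℝ) ^ (a i)) :
    P ∣ Q := by
  subst hPdeg
  exact stmt_12_general hcop hP hPH hQdeg hQK hAmonic
    (fun i ↦ (hAdeg i).trans_le (le_add_right (had i))) hPA hQA
    (by simpa only [two_mul, hAdeg] using hbig)
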